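/- Let K be a sextic CM field (a number field of degree 6 over ℚ, totally complex, containing a totally real subfield K₊ with [K₊:ℚ] = 3). Assume K contains no imaginary quadratic subfield, i.e., no subfield L ⊆ K with [L:ℚ] = 2. Let 𝓞 be an order in K. Then there exists μ ∈ 𝓞 such that K = ℚ(μ), μ² is totally negative (φ(μ²) is a negative real for every embedding φ : K → ℂ), and 0 < −(1/2)·Tr_{K/ℚ}(μ²) ≤ (6/π)^{2/3}·|Δ(𝓞)|^{1/3}. -/

import Mathlib

open Module

/-!
For a totally complex field `K` of degree `2g`, Minkowski's theorem gives a nonzero lattice point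
`μ` with `|Re φ(μ)| < 1/2` for every `φ` and `∑ w, (Im w(μ))² < ρ`, as soon as the volume
`(√π √ρ)^g / Γ(g/2 + 1)` of this product of a cube and a Euclidean ball exceeds `2^(2g)` times the
covolume `2^(-g) |Δ|^(1/2)`. If `K` is a CM field and `μ` is an algebraic integer, the sum
`μ + conj μ` is one too and all its conjugates are smaller than `1` in absolute value, so it is
zero and `μ` is purely imaginary. Hence `μ²` is totally negative, `∑ w, (Im w(μ))² = -Tr(μ²)/2`,
and `ℚ(μ)` is totally complex. In degree `6`, a totally complex subfield is either quadratic or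
all of `K`.
-/

section LatticePoints

open MeasureTheory

theorem exists_ne_zero_mem_span_int_of_abs_det_lt {ι E : Type*} [Fintype ι] [DecidableEq ι]
    [NormedAddCommGroup E] [NormedSpace ℝ E] [MeasurableSpace E] [BorelSpace E]
    (b₀ b : Basis ι ℝ E) {s : Set E} (hsymm : ∀ x ∈ s, -x ∈ s) (hconv : Convex ℝ s)
    (h : ENNReal.ofReal |b₀.det b| * 2 ^ Fintype.card ι < b₀.addHaar s) :
    ∃ x ∈ Submodule.span ℤ (Set.range b), x ≠ 0 ∧ x ∈ s := by
  have : FiniteDimensional ℝ E := b.finiteDimensional_of_finite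
  have : Countable (Submodule.span ℤ (Set.range b)).toAddSubgroup :=
    inferInstanceAs (Countable (Submodule.span ℤ (Set.range b)))
  have hvol : b₀.addHaar (ZSpan.fundamentalDomain b) = ENNReal.ofReal |b₀.det b| := by
    rw [ZSpan.measure_fundamentalDomain b _ b₀,
      measure_congr (ZSpan.fundamentalDomain_ae_parallelepiped b₀ _), b₀.addHaar_self, mul_one]
  obtain ⟨x, hx0, hx⟩ := exists_ne_zero_mem_lattice_of_measure_mul_two_pow_lt_measure
    (ZSpan.isAddFundamentalDomain' b b₀.addHaar) hsymm hconv
    (by rwa [hvol, finrank_eq_card_basis b])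
  exact ⟨x, x.2, by simpa using hx0, hx⟩

variable (ι : Type*) [Fintype ι]

/-- The standard basis of `ℝ^ι × ℝ^ι`, the target of `reImEmbedding`. The first factor carries the
sup norm and the second one the Euclidean norm, so that the convex body of the proof is a product
of two balls. -/
noncomputable def reImBasis : Basis (ι ⊕ ι) ℝ ((ι → ℝ) × EuclideanSpace ℝ ι) :=
  (Pi.basisFun ℝ ι).prod (EuclideanSpace.basisFun ι ℝ).toBasis

theorem addHaar_reImBasis_ball_prod_ball [Nonempty ι] {r : ℝ} (hr : 0 ≤ r) :
    (reImBasis ι).addHaar (Metric.ball 0 (1 / 2) ×ˢ Metric.ball 0 r) =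
      ENNReal.ofReal ((√Real.pi * r) ^ Fintype.card ι / Real.Gamma (Fintype.card ι / 2 + 1)) := by
  have hcube : (Pi.basisFun ℝ ι).addHaar (Metric.ball 0 (1 / 2)) = 1 := by
    rw [Basis.addHaar_def, Basis.parallelepiped_basisFun, addHaarMeasure_eq_volume_pi,
      Real.volume_pi_ball _ one_half_pos]
    norm_num
  rw [reImBasis, Basis.prod_addHaar, Measure.prod_prod, hcube, one_mul,
    OrthonormalBasis.addHaar_eq_volume, EuclideanSpace.volume_ball,
    ← ENNReal.ofReal_pow hr, ← ENNReal.ofReal_mul (pow_nonneg hr _), mul_pow, mul_comm (r ^ _),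
    div_mul_eq_mul_div]

variable {ι}

theorem exists_ne_zero_mem_span_int_norm_fst_lt_norm_snd_lt [DecidableEq ι] [Nonempty ι]
    (b : Basis (ι ⊕ ι) ℝ ((ι → ℝ) × EuclideanSpace ℝ ι)) {r : ℝ} (hr : 0 ≤ r)
    (h : 4 ^ Fintype.card ι * Real.Gamma (Fintype.card ι / 2 + 1) * |(reImBasis ι).det b| <
      (√Real.pi * r) ^ Fintype.card ι) :
    ∃ x ∈ Submodule.span ℤ (Set.range b), x ≠ 0 ∧ ‖x.1‖ < 1 / 2 ∧ ‖x.2‖ < r := by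
  have hΓ : 0 < Real.Gamma (Fintype.card ι / 2 + 1) := Real.Gamma_pos_of_pos (by positivity)
  have hpow : (2 : ENNReal) ^ Fintype.card (ι ⊕ ι) = ENNReal.ofReal (4 ^ Fintype.card ι) := by
    rw [Fintype.card_sum, ← two_mul, pow_mul, ENNReal.ofReal_pow zero_le_four,
      ENNReal.ofReal_ofNat]
    norm_num
  have hvol : ENNReal.ofReal |(reImBasis ι).det b| * 2 ^ Fintype.card (ι ⊕ ι) <
      (reImBasis ι).addHaar (Metric.ball 0 (1 / 2) ×ˢ Metric.ball 0 r) := by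
    rw [addHaar_reImBasis_ball_prod_ball ι hr, hpow, ← ENNReal.ofReal_mul (abs_nonneg _),
      ENNReal.ofReal_lt_ofReal_iff_of_nonneg (by positivity), lt_div_iff₀ hΓ]
    linarith
  obtain ⟨x, hx, hx0, hxs⟩ := exists_ne_zero_mem_span_int_of_abs_det_lt (reImBasis ι) b
    (by simp) ((convex_ball _ _).prod (convex_ball _ _)) hvol
  exact ⟨x, hx, hx0, by simpa using hxs⟩

end LatticePoints

section NumberField

open NumberField InfinitePlace ComplexEmbedding

variable {K : Type*} [Field K]

theorem re_embedding_mk (φ : K →+* ℂ) (x : K) :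
    ((InfinitePlace.mk φ).embedding x).re = (φ x).re := by
  rcases embedding_mk_eq φ with h | h <;> simp [h]

variable [NumberField K]

variable (K) in
/-- The embedding `x ↦ ((Re w(x))_w, (Im w(x))_w)` of `K` in a real vector space, where `w` runs
over the infinite places of `K`, each read as its chosen complex embedding. -/
noncomputable def reImEmbedding :
    K →ₗ[ℤ] (InfinitePlace K → ℝ) × EuclideanSpace ℝ (InfinitePlace K) :=
  (AddMonoidHom.mk' (fun x => (fun w => (w.embedding x).re,
    WithLp.toLp 2 fun w => (w.embedding x).im)) fun x y => by ext <;> simp).toIntLinearMap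

@[simp]
theorem reImEmbedding_fst (x : K) (w : InfinitePlace K) :
    (reImEmbedding K x).1 w = (w.embedding x).re :=
  rfl

@[simp]
theorem reImEmbedding_snd (x : K) (w : InfinitePlace K) :
    (reImEmbedding K x).2 w = (w.embedding x).im :=
  rfl

theorem trace_eq_sum_mult_mul_re (x : K) :
    (Algebra.trace ℚ K x : ℝ) = ∑ w : InfinitePlace K, w.mult * (w.embedding x).re := by
  classical
  have hsum : (Algebra.trace ℚ K x : ℂ) = ∑ φ : K →+* ℂ, φ x := by
    rw [← eq_ratCast (algebraMap ℚ ℂ), trace_eq_sum_embeddings]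
    exact Fintype.sum_equiv (RingHom.equivRatAlgHom K ℂ).symm _ _ fun _ => rfl
  calc (Algebra.trace ℚ K x : ℝ) = ∑ φ : K →+* ℂ, (φ x).re := by
        simpa using congrArg Complex.re hsum
    _ = ∑ w : InfinitePlace K, ∑ φ with InfinitePlace.mk φ = w, (w.embedding x).re := by
        rw [← Finset.sum_fiberwise _ InfinitePlace.mk]
        refine Finset.sum_congr rfl fun w _ => Finset.sum_congr rfl fun φ hφ => ?_
        rw [← (Finset.mem_filter.1 hφ).2, re_embedding_mk]
    _ = ∑ w : InfinitePlace K, w.mult * (w.embedding x).re := by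
        simp only [Finset.sum_const, card_filter_mk_eq, nsmul_eq_mul]

theorem trace_mul_eq_two_mul_sum [IsTotallyComplex K] (x y : K) :
    (Algebra.trace ℚ K (x * y) : ℝ) = 2 * ∑ w : InfinitePlace K,
      ((w.embedding x).re * (w.embedding y).re - (w.embedding x).im * (w.embedding y).im) := by
  rw [trace_eq_sum_mult_mul_re, Finset.mul_sum]
  exact Finset.sum_congr rfl fun w _ => by simp

theorem two_mul_card_infinitePlace [IsTotallyComplex K] :
    2 * Fintype.card (InfinitePlace K) = finrank ℚ K := by
  rw [card_eq_nrRealPlaces_add_nrComplexPlaces, IsTotallyComplex.nrRealPlaces_eq_zero, zero_add,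
    IsTotallyComplex.finrank]

open Classical in
theorem discr_eq_neg_four_pow_mul_det_sq [IsTotallyComplex K]
    (b : InfinitePlace K ⊕ InfinitePlace K → K) :
    (Algebra.discr ℚ b : ℝ) = (-4) ^ Fintype.card (InfinitePlace K) *
      (reImBasis (InfinitePlace K)).det (reImEmbedding K ∘ b) ^ 2 := by
  set A := (reImBasis (InfinitePlace K)).toMatrix (reImEmbedding K ∘ b)
  have htrace : (Algebra.traceMatrix ℚ b).map (Rat.castHom ℝ) =
      A.transpose * Matrix.diagonal (Sum.elim (fun _ => 2) fun _ => -2) * A := by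
    ext i j
    simp [Matrix.mul_apply, Matrix.diagonal_apply, Algebra.traceMatrix_apply,
      Algebra.traceForm_apply, trace_mul_eq_two_mul_sum, A, Basis.toMatrix_apply, reImBasis,
      Finset.mul_sum, mul_add, Finset.sum_add_distrib, sub_eq_add_neg, mul_comm, mul_left_comm]
  calc (Algebra.discr ℚ b : ℝ) = ((Algebra.traceMatrix ℚ b).map (Rat.castHom ℝ)).det :=
        RingHom.map_det (Rat.castHom ℝ) _
    _ = (2 * -2) ^ Fintype.card (InfinitePlace K) * A.det ^ 2 := by
        rw [htrace, Matrix.det_mul, Matrix.det_mul, Matrix.det_transpose, Matrix.det_diagonal,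
          Fintype.prod_sum_type]
        simp only [Sum.elim_inl, Sum.elim_inr, Finset.prod_const, Finset.card_univ]
        rw [mul_pow]
        ring
    _ = _ := by rw [Basis.det_apply, show (2 * -2 : ℝ) = -4 by norm_num]

theorem exists_basis_coe_eq_reImEmbedding_comp [IsTotallyComplex K]
    (b : Basis (InfinitePlace K ⊕ InfinitePlace K) ℚ K) :
    ∃ B : Basis (InfinitePlace K ⊕ InfinitePlace K) ℝ
      ((InfinitePlace K → ℝ) × EuclideanSpace ℝ (InfinitePlace K)), ⇑B = reImEmbedding K ∘ b := by
  classical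
  have hdet : (reImBasis (InfinitePlace K)).det (reImEmbedding K ∘ b) ≠ 0 := by
    intro h0
    refine Algebra.discr_not_zero_of_basis ℚ b (Rat.cast_injective (α := ℝ) ?_)
    rw [discr_eq_neg_four_pow_mul_det_sq, h0]
    simp
  obtain ⟨hli, hspan⟩ := (Basis.is_basis_iff_det (reImBasis (InfinitePlace K))).2 hdet.isUnit
  exact ⟨Basis.mk hli hspan.ge, Basis.coe_mk hli hspan.ge⟩

theorem exists_ne_zero_mem_span_int_abs_re_lt_and_sum_im_sq_lt [IsTotallyComplex K]
    {ι : Type*} [Fintype ι] [DecidableEq ι] (b : Basis ι ℚ K) {g : ℕ} (hg : finrank ℚ K = 2 * g)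
    {ρ : ℝ} (hρ : 0 ≤ ρ)
    (h : 4 ^ g * Real.Gamma (g / 2 + 1) ^ 2 * |(Algebra.discr ℚ b : ℝ)| < (Real.pi * ρ) ^ g) :
    ∃ μ ∈ Submodule.span ℤ (Set.range b), μ ≠ 0 ∧ (∀ φ : K →+* ℂ, |(φ μ).re| < 1 / 2) ∧
      ∑ w : InfinitePlace K, (w.embedding μ).im ^ 2 < ρ := by
  classical
  have hcard : Fintype.card (InfinitePlace K) = g := by
    have := two_mul_card_infinitePlace (K := K)
    lia
  obtain ⟨e⟩ : Nonempty (ι ≃ InfinitePlace K ⊕ InfinitePlace K) := by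
    rw [← Fintype.card_eq, Fintype.card_sum, hcard, ← finrank_eq_card_basis b, hg, two_mul]
  set b' := b.reindex e
  obtain ⟨B, hB⟩ := exists_basis_coe_eq_reImEmbedding_comp b'
  have hdiscr : |(Algebra.discr ℚ b : ℝ)| = 4 ^ g * (reImBasis (InfinitePlace K)).det B ^ 2 := by
    rw [← Algebra.discr_reindex ℚ b e, ← Basis.coe_reindex, discr_eq_neg_four_pow_mul_det_sq, ← hB,
      abs_mul, abs_pow, abs_neg, abs_sq, hcard]
    norm_num
  have hdet : 4 ^ g * Real.Gamma (g / 2 + 1) * |(reImBasis (InfinitePlace K)).det B| <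
      (√Real.pi * √ρ) ^ g := by
    refine lt_of_pow_lt_pow_left₀ 2 (by positivity) ?_
    calc _ = 4 ^ g * Real.Gamma (g / 2 + 1) ^ 2 * |(Algebra.discr ℚ b : ℝ)| := by
          rw [hdiscr, mul_pow, sq_abs]
          ring
      _ < (Real.pi * ρ) ^ g := h
      _ = _ := by
          rw [pow_right_comm, mul_pow √Real.pi, Real.sq_sqrt Real.pi_pos.le, Real.sq_sqrt hρ]
  obtain ⟨x, hx, hx0, hxre, hxim⟩ :=
    exists_ne_zero_mem_span_int_norm_fst_lt_norm_snd_lt B (Real.sqrt_nonneg ρ) (by rwa [hcard])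
  rw [hB, Set.range_comp, ← Submodule.map_span, b.range_reindex] at hx
  obtain ⟨μ, hμ, rfl⟩ := hx
  refine ⟨μ, hμ, fun h0 => hx0 (by rw [h0, map_zero]), fun φ => ?_, ?_⟩
  · rw [← re_embedding_mk, ← reImEmbedding_fst, ← Real.norm_eq_abs]
    exact (norm_le_pi_norm _ _).trans_lt hxre
  · rw [EuclideanSpace.norm_eq, Real.sqrt_lt_sqrt_iff (by positivity)] at hxim
    simpa using hxim

theorem isIntegral_of_mem_span_range {R A ι : Type*} [CommRing R] [CommRing A] [Algebra R A]
    {v : ι → A} (hv : ∀ i, IsIntegral R (v i)) {x : A} (hx : x ∈ Submodule.span R (Set.range v)) :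
    IsIntegral R x :=
  have hle : Submodule.span R (Set.range v) ≤ Subalgebra.toSubmodule (integralClosure R A) :=
    Submodule.span_le.2 (Set.range_subset_iff.2 hv)
  hle hx

section CMField

variable [IsCMField K] {μ : K}

theorem complexConj_eq_neg_of_abs_re_lt_half (hμ : IsIntegral ℤ μ)
    (h : ∀ φ : K →+* ℂ, |(φ μ).re| < 1 / 2) : IsCMField.complexConj K μ = -μ := by
  by_contra hne
  have hint : IsIntegral ℤ (μ + IsCMField.complexConj K μ) :=
    hμ.add (hμ.map (IsCMField.complexConj K))
  obtain ⟨φ, hφ : 1 ≤ ‖φ (μ + IsCMField.complexConj K μ)‖⟩ :=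
    exists_conjugate_one_le_norm (α := (⟨_, hint⟩ : 𝓞 K)) fun h0 =>
      hne (eq_neg_of_add_eq_zero_right (congrArg Subtype.val h0))
  rw [map_add, IsCMField.complexEmbedding_complexConj, Complex.add_conj,
    Complex.norm_real, Real.norm_eq_abs, abs_mul, abs_two] at hφ
  linarith [h φ]

theorem re_eq_zero_of_complexConj_eq_neg (hμ : IsCMField.complexConj K μ = -μ) (φ : K →+* ℂ) :
    (φ μ).re = 0 := by
  have := congrArg Complex.re (IsCMField.complexEmbedding_complexConj K φ μ)
  rw [hμ, map_neg, Complex.neg_re, Complex.conj_re] at this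
  linarith

theorem map_sq_of_complexConj_eq_neg (hμ : IsCMField.complexConj K μ = -μ) (φ : K →+* ℂ) :
    φ (μ ^ 2) = ((-(φ μ).im ^ 2 : ℝ) : ℂ) := by
  rw [map_pow]
  apply Complex.ext <;> simp [pow_two, re_eq_zero_of_complexConj_eq_neg hμ φ]

theorem im_ne_zero_of_complexConj_eq_neg (hμ : IsCMField.complexConj K μ = -μ) (h0 : μ ≠ 0)
    (φ : K →+* ℂ) : (φ μ).im ≠ 0 := fun him =>
  h0 <| φ.injective <| by
    rw [map_zero]
    exact Complex.ext (re_eq_zero_of_complexConj_eq_neg hμ φ) him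

theorem neg_half_trace_sq_of_complexConj_eq_neg (hμ : IsCMField.complexConj K μ = -μ) :
    ((-(1 / 2 : ℚ) * Algebra.trace ℚ K (μ ^ 2) : ℚ) : ℝ) =
      ∑ w : InfinitePlace K, (w.embedding μ).im ^ 2 := by
  rw [Rat.cast_mul, pow_two, trace_mul_eq_two_mul_sum]
  simp [re_eq_zero_of_complexConj_eq_neg hμ, pow_two]

theorem isTotallyComplex_of_complexConj_eq_neg {F : IntermediateField ℚ K} (hF : μ ∈ F)
    (hμ : IsCMField.complexConj K μ = -μ) (h0 : μ ≠ 0) : IsTotallyComplex F where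
  isComplex w := by
    rw [isComplex_iff]
    intro hreal
    have hlift : lift K w.embedding μ = w.embedding ⟨μ, hF⟩ :=
      lift_algebraMap_apply K w.embedding ⟨μ, hF⟩
    refine im_ne_zero_of_complexConj_eq_neg hμ h0 (lift K w.embedding) ?_
    rw [hlift, ← Complex.conj_eq_iff_im]
    exact RingHom.congr_fun hreal _

theorem exists_two_mul_sum_im_sq_eq_intCast (hint : IsIntegral ℤ μ)
    (hμ : IsCMField.complexConj K μ = -μ) :
    ∃ n : ℤ, 2 * ∑ w : InfinitePlace K, (w.embedding μ).im ^ 2 = n := by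
  obtain ⟨n, hn⟩ := IsIntegrallyClosed.isIntegral_iff.1
    (Algebra.isIntegral_trace (L := ℚ) (hint.pow 2))
  refine ⟨-n, ?_⟩
  rw [← neg_half_trace_sq_of_complexConj_eq_neg hμ, ← hn]
  push_cast
  simp

theorem exists_complexConj_eq_neg_and_sum_im_sq_le {ι : Type*} [Fintype ι] [DecidableEq ι]
    (b : Basis ι ℚ K) (hb : ∀ i, IsIntegral ℤ (b i)) {g : ℕ} (hg : finrank ℚ K = 2 * g) :
    ∃ μ ∈ Submodule.span ℤ (Set.range b), μ ≠ 0 ∧ IsCMField.complexConj K μ = -μ ∧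
      ∑ w : InfinitePlace K, (w.embedding μ).im ^ 2 ≤
        4 / Real.pi * (Real.Gamma (g / 2 + 1) ^ 2 * |(Algebra.discr ℚ b : ℝ)|) ^ (g⁻¹ : ℝ) := by
  have hg0 : g ≠ 0 := by
    rintro rfl
    exact finrank_pos.ne' hg
  set D := Real.Gamma (g / 2 + 1) ^ 2 * |(Algebra.discr ℚ b : ℝ)| with hD
  set R := 4 / Real.pi * D ^ (g⁻¹ : ℝ) with hR
  -- Twice the sum will be an integer, so rounding `2 * R` up makes the strict bound harmless.
  set ρ : ℝ := (⌊2 * R⌋ + 1) / 2 with hρ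
  have hR0 : 0 ≤ R := by positivity
  have hRρ : R < ρ := by linarith [Int.lt_floor_add_one (2 * R)]
  have hvol : 4 ^ g * Real.Gamma (g / 2 + 1) ^ 2 * |(Algebra.discr ℚ b : ℝ)| <
      (Real.pi * ρ) ^ g := by
    calc _ = (Real.pi * R) ^ g := by
          rw [hR, ← mul_assoc, mul_div_cancel₀ _ Real.pi_ne_zero, mul_pow,
            Real.rpow_inv_natCast_pow (by positivity) hg0, hD, mul_assoc]
      _ < (Real.pi * ρ) ^ g := by gcongr
  obtain ⟨μ, hμ, h0, hre, him⟩ :=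
    exists_ne_zero_mem_span_int_abs_re_lt_and_sum_im_sq_lt b hg (hR0.trans hRρ.le) hvol
  have hint : IsIntegral ℤ μ := isIntegral_of_mem_span_range hb hμ
  have hconj := complexConj_eq_neg_of_abs_re_lt_half hint hre
  refine ⟨μ, hμ, h0, hconj, ?_⟩
  obtain ⟨n, hn⟩ := exists_two_mul_sum_im_sq_eq_intCast hint hconj
  have hlt : n < ⌊2 * R⌋ + 1 := by
    rw [← Int.cast_lt (R := ℝ), ← hn]
    push_cast
    linarith
  linarith [Int.le_floor.1 (Int.lt_add_one_iff.1 hlt)]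

end CMField

end NumberField

section Subfields

open NumberField InfinitePlace ComplexEmbedding

variable {K : Type*} [Field K]

theorem isTotallyComplex_of_exists_im_ne_zero (h : ∀ φ : K →+* ℂ, ∃ x : K, (φ x).im ≠ 0) :
    IsTotallyComplex K where
  isComplex w := by
    obtain ⟨x, hx⟩ := h w.embedding
    rw [isComplex_iff]
    exact fun hreal => hx (Complex.conj_eq_iff_im.1 (RingHom.congr_fun hreal x))

theorem linearIndependent_rat_coe [CharZero K] {ι : Type*} {O : Subring K} (b : Basis ι ℤ O) :
    LinearIndependent ℚ fun i => (b i : K) := by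
  rw [← LinearIndependent.iff_fractionRing (R := ℤ)]
  exact b.linearIndependent.map' O.subtype.toAddMonoidHom.toIntLinearMap
    (LinearMap.ker_eq_bot.2 Subtype.val_injective)

variable [NumberField K]

theorem isTotallyReal_of_im_eq_zero {F : IntermediateField ℚ K}
    (h : ∀ φ : K →+* ℂ, ∀ x ∈ F, (φ x).im = 0) : IsTotallyReal F where
  isReal w := by
    rw [InfinitePlace.isReal_iff]
    refine RingHom.ext fun x => Complex.conj_eq_iff_im.2 ?_
    rw [← lift_algebraMap_apply K w.embedding x]
    exact h _ _ x.2

theorem isCMField_of_finrank_eq_two_mul [IsTotallyComplex K] (F : IntermediateField ℚ K)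
    [IsTotallyReal F] (hF : finrank ℚ K = 2 * finrank ℚ F) : IsCMField K := by
  have : Algebra.IsQuadraticExtension F K :=
    ⟨Nat.eq_of_mul_eq_mul_left (finrank_pos (R := ℚ) (M := F))
      (by rw [finrank_mul_finrank, hF, mul_comm])⟩
  exact IsCMField.ofCMExtension F K

theorem eq_top_of_isTotallyComplex_of_finrank_ne_two {p : ℕ} (hp : p.Prime)
    (hK : finrank ℚ K = 2 * p) (hnoquad : ¬ ∃ L : IntermediateField ℚ K, finrank ℚ L = 2)
    (L : IntermediateField ℚ K) [IsTotallyComplex L] : L = ⊤ := by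
  have hL : finrank ℚ L = 2 * nrComplexPlaces L := IsTotallyComplex.finrank L
  have hdvd : nrComplexPlaces L ∣ p := by
    rw [← Nat.mul_dvd_mul_iff_left two_pos, ← hL, ← hK]
    exact ⟨_, (finrank_mul_finrank ℚ L K).symm⟩
  refine IntermediateField.eq_of_le_of_finrank_eq le_top ?_
  rcases hp.eq_one_or_self_of_dvd _ hdvd with h1 | hself
  · exact absurd ⟨L, by rw [hL, h1]⟩ hnoquad
  · rw [hL, hself, IntermediateField.finrank_top', hK]

theorem four_div_pi_mul_rpow_inv_three {D : ℝ} (hD : 0 ≤ D) :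
    4 / Real.pi * (Real.Gamma (3 / 2 + 1) ^ 2 * D) ^ (3⁻¹ : ℝ) =
      (6 / Real.pi) ^ ((2 : ℝ) / 3) * D ^ ((1 : ℝ) / 3) := by
  have hΓ : Real.Gamma (3 / 2 + 1) = 3 / 4 * √Real.pi := by
    rw [Real.Gamma_add_one (by norm_num), show (3 / 2 : ℝ) = 1 / 2 + 1 by norm_num,
      Real.Gamma_add_one (by norm_num), Real.Gamma_one_half_eq]
    ring
  calc _ = ((4 / Real.pi) ^ 3 * (Real.Gamma (3 / 2 + 1) ^ 2 * D)) ^ (3⁻¹ : ℝ) := by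
        rw [Real.mul_rpow (x := (4 / Real.pi) ^ 3) (by positivity) (by positivity),
          show (3⁻¹ : ℝ) = ((3 : ℕ) : ℝ)⁻¹ by norm_num,
          Real.pow_rpow_inv_natCast (by positivity) three_ne_zero]
    _ = ((6 / Real.pi) ^ 2 * D) ^ (3⁻¹ : ℝ) := by
        rw [hΓ, mul_pow _ √Real.pi, Real.sq_sqrt Real.pi_pos.le]
        congr 1
        field
    _ = (6 / Real.pi) ^ ((2 : ℝ) / 3) * D ^ ((1 : ℝ) / 3) := by
        rw [Real.mul_rpow (by positivity) hD, ← Real.rpow_natCast,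
          ← Real.rpow_mul (by positivity)]
        norm_num

end Subfields

theorem stmt_1_general {K ι : Type*} [Field K] [NumberField K] [NumberField.IsCMField K]
    [Fintype ι] [DecidableEq ι] {g : ℕ} (hg : finrank ℚ K = 2 * g)
    (hsub : ∀ L : IntermediateField ℚ K, NumberField.IsTotallyComplex L → L = ⊤)
    (b : Basis ι ℚ K) (hb : ∀ i, IsIntegral ℤ (b i)) :
    ∃ μ ∈ Submodule.span ℤ (Set.range b), IntermediateField.adjoin ℚ {μ} = ⊤ ∧
      (∀ φ : K →+* ℂ, (φ (μ ^ 2)).im = 0 ∧ (φ (μ ^ 2)).re < 0) ∧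
      0 < -(1 / 2 : ℚ) * Algebra.trace ℚ K (μ ^ 2) ∧
      ((-(1 / 2 : ℚ) * Algebra.trace ℚ K (μ ^ 2) : ℚ) : ℝ) ≤
        4 / Real.pi * (Real.Gamma (g / 2 + 1) ^ 2 * |(Algebra.discr ℚ b : ℝ)|) ^ (g⁻¹ : ℝ) := by
  obtain ⟨μ, hμ, h0, hconj, hle⟩ := exists_complexConj_eq_neg_and_sum_im_sq_le b hb hg
  have him := im_ne_zero_of_complexConj_eq_neg hconj h0
  refine ⟨μ, hμ, hsub _ ?_, fun φ => ?_, ?_, ?_⟩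
  · exact isTotallyComplex_of_complexConj_eq_neg (IntermediateField.mem_adjoin_simple_self ℚ μ)
      hconj h0
  · rw [map_sq_of_complexConj_eq_neg hconj]
    exact ⟨Complex.ofReal_im _, neg_lt_zero.2 (by positivity [him φ])⟩
  · rw [← Rat.cast_pos (K := ℝ), neg_half_trace_sq_of_complexConj_eq_neg hconj]
    exact Finset.sum_pos (fun w _ => sq_pos_of_ne_zero (him _)) Finset.univ_nonempty
  · rwa [neg_half_trace_sq_of_complexConj_eq_neg hconj]

/-- Proposition `prop:geomnumbers`, case 1. Let `K` be a sextic CM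
field (with totally real cubic subfield `K₊`) containing no imaginary quadratic subfield,
and let `𝓞` be an order in `K` (a subring of algebraic integers that is free of rank 6
over `ℤ`). Then there is `μ ∈ 𝓞` with `K = ℚ(μ)`, `μ²` totally negative, and
`0 < -(1/2)·Tr_{K/ℚ}(μ²) ≤ (6/π)^{2/3}·|Δ(𝓞)|^{1/3}`. -/
theorem stmt_1
    (K : Type*) [Field K] [NumberField K]
    (hK6 : finrank ℚ K = 6)
    (hKcomplex : ∀ φ : K →+* ℂ, ∃ x : K, (φ x).im ≠ 0)
    (Kp : IntermediateField ℚ K)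
    (hKp3 : finrank ℚ Kp = 3)
    (hKpreal : ∀ φ : K →+* ℂ, ∀ x ∈ Kp, (φ x).im = 0)
    (hnoquad : ¬ ∃ L : IntermediateField ℚ K, finrank ℚ L = 2)
    (O : Subring K)
    (hOint : ∀ x ∈ O, IsIntegral ℤ x)
    (b : Basis (Fin 6) ℤ O) :
    ∃ μ ∈ O, IntermediateField.adjoin ℚ {μ} = ⊤ ∧
      (∀ φ : K →+* ℂ, (φ (μ ^ 2)).im = 0 ∧ (φ (μ ^ 2)).re < 0) ∧
      0 < -(1/2 : ℚ) * Algebra.trace ℚ K (μ ^ 2) ∧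
      ((-(1/2 : ℚ) * Algebra.trace ℚ K (μ ^ 2) : ℚ) : ℝ) ≤
        (6 / Real.pi) ^ ((2 : ℝ)/3) *
          |((Algebra.discr ℚ (fun i => (b i : K)) : ℚ) : ℝ)| ^ ((1 : ℝ)/3) := by
  have : NumberField.IsTotallyComplex K := isTotallyComplex_of_exists_im_ne_zero hKcomplex
  have : NumberField.IsTotallyReal Kp := isTotallyReal_of_im_eq_zero hKpreal
  have : NumberField.IsCMField K := isCMField_of_finrank_eq_two_mul Kp (by rw [hK6, hKp3])
  set B := basisOfLinearIndependentOfCardEqFinrank (linearIndependent_rat_coe b) (by simp [hK6])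
  have hB : ⇑B = fun i => (b i : K) := coe_basisOfLinearIndependentOfCardEqFinrank _ _
  obtain ⟨μ, hμ, h⟩ := stmt_1_general (g := 3) hK6
    (fun L _ => eq_top_of_isTotallyComplex_of_finrank_ne_two Nat.prime_three hK6 hnoquad L) B
    (fun i => hB ▸ hOint _ (b i).2)
  have hμO : μ ∈ O := by
    have hle : Submodule.span ℤ (Set.range B) ≤ O.toAddSubgroup.toIntSubmodule :=
      Submodule.span_le.2 (Set.range_subset_iff.2 fun i => hB ▸ (b i).2)
    exact hle hμ
  rw [Nat.cast_ofNat, four_div_pi_mul_rpow_inv_three (abs_nonneg _), hB] at h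
  exact ⟨μ, hμO, h⟩
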